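/- Let ε > 0 and u⁰ ∈ ℝ with u⁰ < 0. The function φ(x) = 2u⁰(1+u⁰)e^{u⁰ x/ε} / (1 − u⁰ − (1+u⁰)e^{u⁰ x/ε}), defined for x ≥ 0 when the denominator is nonzero, satisfies the first-order corrector equation −ε φ'(x) + u⁰ φ(x) + φ(x)²/2 = 0 and φ(0) = −1 − u⁰. -/

import Mathlib

theorem burgers_corrector (ε u0 : ℝ) (hε : 0 < ε) (hu0 : -1 < u0) (hu0' : u0 < 0)
    (φ : ℝ → ℝ)
    (hφ : ∀ x, φ x = 2 * u0 * (1 + u0) * Real.exp (u0 * x / ε) /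
        (1 - u0 - (1 + u0) * Real.exp (u0 * x / ε))) :
    (∀ x ≥ (0:ℝ), 1 - u0 - (1 + u0) * Real.exp (u0 * x / ε) ≠ 0 →
      -ε * deriv φ x + u0 * φ x + φ x ^ 2 / 2 = 0) ∧ φ 0 = -1 - u0 := by
  constructor
  · intro x _ hD
    have hE : HasDerivAt (fun y : ℝ => Real.exp (u0 * y / ε))
        (Real.exp (u0 * x / ε) * (u0 * 1 / ε)) x :=
      (((hasDerivAt_id x).const_mul u0).div_const ε).exp
    have h := (hE.const_mul (2 * u0 * (1 + u0))).fun_div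
      ((hE.const_mul (1 + u0)).const_sub (1 - u0)) hD
    rw [← funext hφ] at h
    rw [h.deriv, hφ x]
    have hε' := hε.ne'
    generalize Real.exp (u0 * x / ε) = E at *
    generalize hd : 1 - u0 - (1 + u0) * E = D at *
    field_simp
    rw [← hd]
    ring
  · rw [hφ 0]
    have h0 := hu0'.ne
    have h1 : 1 - u0 - (1 + u0) * Real.exp (u0 * 0 / ε) ≠ 0 := by
      simp only [mul_zero, zero_div, Real.exp_zero]
      intro h
      apply h0
      linarith
    rw [div_eq_iff h1]
    simp only [mul_zero, zero_div, Real.exp_zero]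
    ring
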